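/- Let A be a separable C*-algebra with T(A) ≠ ∅. For any central sequence (f_n)_n of positive contractions in A, there exists a central sequence (f̃_n)_n of positive contractions in A such that ‖f̃_n f_n − f̃_n‖ → 0 as n → ∞ and lim_{m→∞} liminf_{n→∞} inf_{τ∈T(A)} τ(f̃_n^m) = lim_{m→∞} liminf_{n→∞} inf_{τ∈T(A)} τ(f_n^m). -/

import Mathlib

open Filter Topology

section NonUnitalDefs

variable {A : Type*} [NonUnitalCStarAlgebra A]

/-- A tracial state on a (not necessarily unital) C*-algebra: a norm-one positive linear
functional satisfying the trace property `τ(ab) = τ(ba)`. -/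
def IsTracialState (τ : A →L[ℂ] ℂ) : Prop :=
  ‖τ‖ = 1 ∧ (∀ a : A, 0 ≤ (τ (star a * a)).re ∧ (τ (star a * a)).im = 0) ∧
    ∀ a b : A, τ (a * b) = τ (b * a)

end NonUnitalDefs

/-- The set `T(A)` of tracial states, as a type. -/
abbrev TState (A : Type*) [NonUnitalCStarAlgebra A] := {τ : A →L[ℂ] ℂ // IsTracialState τ}

section NonUnitalDefs2

variable {A : Type*} [NonUnitalCStarAlgebra A]

/-- `inf_{τ ∈ T(A)} g τ`. -/
noncomputable def trInf (g : TState A → ℝ) : ℝ := ⨅ τ, g τ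

/-- A (bounded) central sequence in `A`. -/
def IsCentralSeq (x : ℕ → A) : Prop :=
  (∃ C : ℝ, ∀ n, ‖x n‖ ≤ C) ∧ ∀ a : A, Tendsto (fun n => ‖x n * a - a * x n‖) atTop (𝓝 0)

/-- Positivity in a C*-algebra, phrased algebraically: `x = b* b` for some `b`. -/
def IsPos (x : A) : Prop := ∃ b : A, x = star b * b

/-- A positive contraction. -/
def IsPosContraction (x : A) : Prop := IsPos x ∧ ‖x‖ ≤ 1

/-- `selfPow x m = x ^ (m + 1)`, the powers of `x` available without a unit. -/
def selfPow (x : A) : ℕ → A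
  | 0 => x
  | m + 1 => selfPow x m * x

end NonUnitalDefs2

/-!
The approximate fixed-point property comes from taking high powers: `‖x ^ (k + 1) x - x ^ (k + 1)‖`
is at most `1 / (k + 1)` for a positive contraction `x`, because `t ^ k * (1 - t) ≤ 1 / k` on
`[0, 1]`. So put `f̃ n = f n ^ (l n + 1)` with `l n → ∞` so slowly that centrality survives, which
separability allows. All powers of `f̃ n` are then powers of `f n` with exponents tending to
infinity, and since `inf_τ τ(f n ^ k)` decreases in `k`, the liminf of the traces of any of them is
at most the limit `c` on the right-hand side. For the reverse inequality `l` is chosen so slow that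
moreover `c - 1 / (l n + 1) < inf_τ τ(f n ^ (l n + 1) ^ 2)`; for each fixed `m` the exponent
`(l n + 1) * (m + 1)` is eventually below `(l n + 1) ^ 2`.
-/

open Set

section DiagonalSequences

lemma exists_tendsto_atTop_eventually_diagonal {P : ℕ → ℕ → Prop}
    (hP : ∀ l, ∀ᶠ n in atTop, P l n) :
    ∃ l : ℕ → ℕ, Tendsto l atTop atTop ∧ ∀ᶠ n in atTop, P (l n) n := by
  classical
  refine ⟨fun n => Nat.findGreatest (P · n) n, tendsto_atTop.2 fun b => ?_, ?_⟩
  · filter_upwards [hP b, eventually_ge_atTop b] with n hPb hbn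
    exact Nat.le_findGreatest hbn hPb
  · filter_upwards [hP 0] with n hP0
    exact Nat.findGreatest_spec (P := (P · n)) n.zero_le hP0

variable {ι : Type*} {F : Filter ι} {C : ℝ}

lemma isBoundedUnder_ge_of_abs_le {v : ι → ℝ} (hv : ∀ i, |v i| ≤ C) :
    F.IsBoundedUnder (· ≥ ·) v :=
  isBoundedUnder_of ⟨-C, fun i => (abs_le.1 (hv i)).1⟩

variable [F.NeBot]

lemma isCoboundedUnder_ge_of_abs_le {v : ι → ℝ} (hv : ∀ i, |v i| ≤ C) :
    F.IsCoboundedUnder (· ≥ ·) v :=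
  (isBoundedUnder_of ⟨C, fun i => (abs_le.1 (hv i)).2⟩ :
    F.IsBoundedUnder (· ≤ ·) v).isCoboundedUnder_ge

variable {g : ℕ → ι → ℝ}

lemma bddBelow_range_liminf (hC : ∀ k i, |g k i| ≤ C) :
    BddBelow (range fun k => liminf (g k) F) :=
  ⟨-C, forall_mem_range.2 fun k =>
    le_liminf_of_le (isCoboundedUnder_ge_of_abs_le (hC k))
      (.of_forall fun i => (abs_le.1 (hC k i)).1)⟩

lemma tendsto_liminf_of_antitone (hg : ∀ i, Antitone fun k => g k i)
    (hC : ∀ k i, |g k i| ≤ C) :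
    Tendsto (fun k => liminf (g k) F) atTop (𝓝 (⨅ k, liminf (g k) F)) :=
  tendsto_atTop_ciInf
    (fun j k hjk => liminf_le_liminf (.of_forall fun i => hg i hjk)
      (isBoundedUnder_ge_of_abs_le (hC k)) (isCoboundedUnder_ge_of_abs_le (hC j)))
    (bddBelow_range_liminf hC)

lemma eventually_iInf_liminf_sub_lt (hC : ∀ k i, |g k i| ≤ C) (k : ℕ) {ε : ℝ} (hε : 0 < ε) :
    ∀ᶠ i in F, (⨅ k, liminf (g k) F) - ε < g k i :=
  eventually_lt_of_lt_liminf
    ((sub_lt_self _ hε).trans_le (ciInf_le (bddBelow_range_liminf hC) k))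
    (isBoundedUnder_ge_of_abs_le (hC k))

lemma le_liminf_of_eventually_sub_lt {v δ : ι → ℝ} {a : ℝ} (hv : ∀ i, |v i| ≤ C)
    (hδ : Tendsto δ F (𝓝 0)) (hlt : ∀ᶠ i in F, a - δ i < v i) : a ≤ liminf v F := by
  have hlim : Tendsto (fun i => a - δ i) F (𝓝 a) := by simpa using hδ.const_sub a
  calc a = liminf (fun i => a - δ i) F := hlim.liminf_eq.symm
    _ ≤ liminf v F := liminf_le_liminf (hlt.mono fun _ => le_of_lt) hlim.isBoundedUnder_ge
        (isCoboundedUnder_ge_of_abs_le hv)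

lemma liminf_diagonal_eq_iInf (hg : ∀ i, Antitone fun k => g k i) (hC : ∀ k i, |g k i| ≤ C)
    {u v : ι → ℕ} (hu : Tendsto u F atTop) (huv : u ≤ᶠ[F] v)
    (hv : ⨅ k, liminf (g k) F ≤ liminf (fun i => g (v i) i) F) :
    liminf (fun i => g (u i) i) F = ⨅ k, liminf (g k) F := by
  apply le_antisymm
  · refine le_ciInf fun k => liminf_le_liminf ?_
      (isBoundedUnder_ge_of_abs_le fun i => hC (u i) i) (isCoboundedUnder_ge_of_abs_le (hC k))
    filter_upwards [hu.eventually_ge_atTop k] with i hki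
    exact hg i hki
  · refine hv.trans (liminf_le_liminf (huv.mono fun i hi => hg i hi)
      (isBoundedUnder_ge_of_abs_le fun i => hC (v i) i)
      (isCoboundedUnder_ge_of_abs_le fun i => hC (u i) i))

end DiagonalSequences

section CentralSequences

variable {A : Type*} [NonUnitalCStarAlgebra A]

namespace IsCentralSeq

lemma mul {x y : ℕ → A} (hx : IsCentralSeq x) (hy : IsCentralSeq y) :
    IsCentralSeq fun n => x n * y n := by
  obtain ⟨⟨C, hC⟩, hxc⟩ := hx
  obtain ⟨⟨D, hD⟩, hyc⟩ := hy
  refine ⟨⟨C * D, fun n => norm_mul_le_of_le (hC n) (hD n)⟩, fun a => ?_⟩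
  have hlim : Tendsto (fun n => C * ‖y n * a - a * y n‖ + ‖x n * a - a * x n‖ * D) atTop (𝓝 0) := by
    simpa using ((hyc a).const_mul C).add ((hxc a).mul_const D)
  refine squeeze_zero (fun _ => norm_nonneg _) (fun n => ?_) hlim
  have leibniz : x n * y n * a - a * (x n * y n) =
      x n * (y n * a - a * y n) + (x n * a - a * x n) * y n := by noncomm_ring
  rw [leibniz]
  exact norm_add_le_of_le (norm_mul_le_of_le (hC n) le_rfl) (norm_mul_le_of_le le_rfl (hD n))

lemma selfPow {x : ℕ → A} (hx : IsCentralSeq x) (k : ℕ) :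
    IsCentralSeq fun n => selfPow (x n) k := by
  induction k with
  | zero => exact hx
  | succ k ih => exact ih.mul hx

lemma of_dense {x : ℕ → A} {C : ℝ} (hC : ∀ n, ‖x n‖ ≤ C) {s : Set A} (hs : Dense s)
    (hxs : ∀ a ∈ s, Tendsto (fun n => ‖x n * a - a * x n‖) atTop (𝓝 0)) :
    IsCentralSeq x := by
  have hlip (n : ℕ) : LipschitzWith (C + C).toNNReal fun a => ‖x n * a - a * x n‖ := by
    refine LipschitzWith.of_dist_le' fun a b => ?_
    have hsub : (x n * a - a * x n) - (x n * b - b * x n) = x n * (a - b) - (a - b) * x n := by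
      noncomm_ring
    calc dist ‖x n * a - a * x n‖ ‖x n * b - b * x n‖
        ≤ ‖x n * (a - b) - (a - b) * x n‖ := hsub ▸ abs_norm_sub_norm_le _ _
      _ ≤ C * ‖a - b‖ + ‖a - b‖ * C :=
          norm_sub_le_of_le (norm_mul_le_of_le (hC n) le_rfl) (norm_mul_le_of_le le_rfl (hC n))
      _ = (C + C) * dist a b := by rw [dist_eq_norm]; ring
  have hclosed : IsClosed {a | Tendsto (fun n => ‖x n * a - a * x n‖) atTop (𝓝 0)} :=
    (LipschitzWith.uniformEquicontinuous _ _ hlip).equicontinuous.isClosed_setOfPred_tendsto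
      continuous_const
  exact ⟨⟨C, hC⟩, fun a => hclosed.closure_subset_iff.2 hxs (hs a)⟩

lemma exists_diagonal [TopologicalSpace.SeparableSpace A] {x : ℕ → ℕ → A}
    (hx : ∀ l, IsCentralSeq (x l)) {C : ℝ} (hC : ∀ l n, ‖x l n‖ ≤ C) {P : ℕ → ℕ → Prop}
    (hP : ∀ l, ∀ᶠ n in atTop, P l n) :
    ∃ l : ℕ → ℕ, Tendsto l atTop atTop ∧ IsCentralSeq (fun n => x (l n) n) ∧
      ∀ᶠ n in atTop, P (l n) n := by
  obtain ⟨a, ha⟩ := TopologicalSpace.exists_dense_seq A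
  have hcomm (l : ℕ) : ∀ᶠ n in atTop, ∀ j ∈ Finset.range l,
      ‖x l n * a j - a j * x l n‖ < 1 / ((l : ℝ) + 1) :=
    (eventually_all_finset _).2 fun j _ =>
      ((hx l).2 (a j)).eventually_lt_const Nat.one_div_pos_of_nat
  obtain ⟨l, hl, hlP⟩ :=
    exists_tendsto_atTop_eventually_diagonal fun l => (hcomm l).and (hP l)
  refine ⟨l, hl, of_dense (fun n => hC (l n) n) ha (forall_mem_range.2 fun j => ?_),
    hlP.mono fun _ h => h.2⟩
  refine squeeze_zero' (.of_forall fun _ => norm_nonneg _) ?_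
    (tendsto_one_div_add_atTop_nhds_zero_nat.comp hl)
  filter_upwards [hlP, hl.eventually_gt_atTop j] with n hn hjn
  exact (hn.1 j (Finset.mem_range.2 hjn)).le

end IsCentralSeq

end CentralSequences

section Powers

variable {A : Type*} [NonUnitalCStarAlgebra A]

lemma inr_selfPow (x : A) (k : ℕ) :
    ((selfPow x k : A) : Unitization ℂ A) = (x : Unitization ℂ A) ^ (k + 1) := by
  induction k with
  | zero => simp [selfPow]
  | succ k ih => rw [selfPow, Unitization.inr_mul, ih, pow_succ _ (k + 1)]

lemma selfPow_selfPow (x : A) (l m : ℕ) : selfPow (selfPow x l) m = selfPow x (l * m + l + m) := by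
  apply Unitization.inr_injective (R := ℂ)
  simp only [inr_selfPow, ← pow_mul]
  congr 1
  ring

lemma norm_selfPow_le_one {x : A} (hx : ‖x‖ ≤ 1) (k : ℕ) : ‖selfPow x k‖ ≤ 1 := by
  induction k with
  | zero => exact hx
  | succ k ih => exact (norm_mul_le_of_le ih hx).trans_eq (one_mul 1)

lemma selfPow_eq_cfcₙ {x : A} (hx : IsSelfAdjoint x) (k : ℕ) :
    selfPow x k = cfcₙ (fun t : ℝ => t ^ (k + 1)) x := by
  induction k with
  | zero => simp [selfPow, cfcₙ_id' ℝ x hx]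
  | succ k ih =>
    calc selfPow x k * x = cfcₙ (fun t : ℝ => t ^ (k + 1)) x * cfcₙ (fun t : ℝ => t) x := by
          rw [ih, cfcₙ_id' ℝ x hx]
      _ = cfcₙ (fun t : ℝ => t ^ (k + 1 + 1)) x := by
          rw [← cfcₙ_mul _ _ x]; simp only [← pow_succ]

lemma natCast_mul_pow_mul_one_sub_le_one {t : ℝ} (ht : t ∈ Icc 0 1) (k : ℕ) :
    k * (t ^ k * (1 - t)) ≤ 1 := by
  have hsum : k * t ^ k ≤ ∑ i ∈ Finset.range k, t ^ i := by
    simpa using Finset.card_nsmul_le_sum (Finset.range k) (t ^ ·) (t ^ k) fun i hi =>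
      pow_le_pow_of_le_one ht.1 ht.2 (Finset.mem_range.1 hi).le
  calc k * (t ^ k * (1 - t)) = (1 - t) * (k * t ^ k) := by ring
    _ ≤ (1 - t) * ∑ i ∈ Finset.range k, t ^ i :=
        mul_le_mul_of_nonneg_left hsum (sub_nonneg.2 ht.2)
    _ = 1 - t ^ k := mul_neg_geom_sum t k
    _ ≤ 1 := sub_le_self 1 (pow_nonneg ht.1 k)

variable [PartialOrder A] [StarOrderedRing A] {x : A}

lemma isPos_iff_nonneg : IsPos x ↔ 0 ≤ x :=
  CStarAlgebra.nonneg_iff_eq_star_mul_self.symm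

lemma quasispectrum_subset_Icc_zero_norm (hx : 0 ≤ x) : quasispectrum ℝ x ⊆ Icc 0 ‖x‖ :=
  fun t ht => ⟨quasispectrum_nonneg_of_nonneg x hx t ht, (le_abs_self t).trans <|
    NonUnitalIsometricContinuousFunctionalCalculus.norm_quasispectrum_le x ht (.of_nonneg hx)⟩

lemma selfPow_nonneg (hx : 0 ≤ x) (k : ℕ) : 0 ≤ selfPow x k := by
  rw [selfPow_eq_cfcₙ (.of_nonneg hx)]
  exact cfcₙ_nonneg fun t ht => pow_nonneg (quasispectrum_nonneg_of_nonneg x hx t ht) _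

lemma selfPow_antitone (hx : 0 ≤ x) (hx1 : ‖x‖ ≤ 1) : Antitone (selfPow x) := by
  intro j k hjk
  rw [selfPow_eq_cfcₙ (.of_nonneg hx), selfPow_eq_cfcₙ (.of_nonneg hx)]
  refine cfcₙ_mono fun t ht => ?_
  obtain ⟨ht0, htx⟩ := quasispectrum_subset_Icc_zero_norm hx ht
  exact pow_le_pow_of_le_one ht0 (htx.trans hx1) (Nat.succ_le_succ hjk)

lemma norm_selfPow_mul_self_sub_le (hx : 0 ≤ x) (hx1 : ‖x‖ ≤ 1) (k : ℕ) :
    ‖selfPow x k * x - selfPow x k‖ ≤ 1 / ((k : ℝ) + 1) := by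
  have hcfc : selfPow x k * x - selfPow x k =
      cfcₙ (fun t : ℝ => t ^ (k + 2) - t ^ (k + 1)) x := by
    change selfPow x (k + 1) - selfPow x k = _
    rw [selfPow_eq_cfcₙ (.of_nonneg hx), selfPow_eq_cfcₙ (.of_nonneg hx), ← cfcₙ_sub _ _ x]
  rw [hcfc]
  refine norm_cfcₙ_le fun t ht => ?_
  obtain ⟨ht0, htx⟩ := quasispectrum_subset_Icc_zero_norm hx ht
  have ht1 : t ≤ 1 := htx.trans hx1
  have hpos : 0 ≤ t ^ (k + 1) * (1 - t) := mul_nonneg (pow_nonneg ht0 _) (sub_nonneg.2 ht1)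
  calc ‖t ^ (k + 2) - t ^ (k + 1)‖ = ‖t ^ (k + 1) * (1 - t)‖ := by rw [norm_sub_rev]; ring_nf
    _ = t ^ (k + 1) * (1 - t) := Real.norm_of_nonneg hpos
    _ ≤ 1 / ((k : ℝ) + 1) := by
        rw [le_div_iff₀' k.cast_add_one_pos]
        exact_mod_cast natCast_mul_pow_mul_one_sub_le_one ⟨ht0, ht1⟩ (k + 1)

end Powers

section MinTrace

variable {A : Type*} [NonUnitalCStarAlgebra A]

/-- The least trace `inf_{τ ∈ T(A)} τ(x)` of a self-adjoint `x`. For general `x` the real part of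
`τ(x)` is taken. -/
noncomputable def minTrace (x : A) : ℝ := trInf fun τ : TState A => (τ.1 x).re

lemma IsTracialState.abs_re_le_norm {τ : A →L[ℂ] ℂ} (hτ : IsTracialState τ) (x : A) :
    |(τ x).re| ≤ ‖x‖ :=
  (Complex.abs_re_le_norm _).trans <| (τ.le_opNorm x).trans_eq <| by rw [hτ.1, one_mul]

lemma bddBelow_range_re_apply (x : A) : BddBelow (range fun τ : TState A => (τ.1 x).re) :=
  ⟨-‖x‖, forall_mem_range.2 fun τ => (abs_le.1 (τ.2.abs_re_le_norm x)).1⟩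

lemma abs_minTrace_le_norm [Nonempty (TState A)] (x : A) : |minTrace x| ≤ ‖x‖ := by
  obtain ⟨τ⟩ := ‹Nonempty (TState A)›
  refine abs_le.2 ⟨le_ciInf fun σ => (abs_le.1 (σ.2.abs_re_le_norm x)).1, ?_⟩
  exact ciInf_le_of_le (bddBelow_range_re_apply x) τ (abs_le.1 (τ.2.abs_re_le_norm x)).2

lemma IsTracialState.re_mono [PartialOrder A] [StarOrderedRing A] {τ : A →L[ℂ] ℂ}
    (hτ : IsTracialState τ) {x y : A} (hxy : x ≤ y) : (τ x).re ≤ (τ y).re := by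
  obtain ⟨d, hd⟩ := CStarAlgebra.nonneg_iff_eq_star_mul_self.1 (sub_nonneg.2 hxy)
  have hpos : 0 ≤ (τ (y - x)).re := hd ▸ (hτ.2.1 d).1
  rwa [map_sub, Complex.sub_re, sub_nonneg] at hpos

lemma minTrace_mono [PartialOrder A] [StarOrderedRing A] : Monotone (minTrace : A → ℝ) :=
  fun x _ hxy => ciInf_mono (bddBelow_range_re_apply x) fun τ => τ.2.re_mono hxy

end MinTrace

/-- Lemma 2.3 of Matui–Sato: if `A` is a separable C*-algebra with
`T(A) ≠ ∅`, then for every central sequence `(f_n)` of positive contractions there is a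
central sequence `(f̃_n)` of positive contractions with `‖f̃_n f_n - f̃_n‖ → 0` and
`lim_m liminf_n inf_{τ ∈ T(A)} τ(f̃_n^m) = lim_m liminf_n inf_{τ ∈ T(A)} τ(f_n^m)`
(both limits over `m` exist and share a common value `c`; here `selfPow x m = x^(m+1)`). -/
theorem lemma_fn (A : Type*) [NonUnitalCStarAlgebra A] [TopologicalSpace.SeparableSpace A]
    (htr : Nonempty (TState A))
    (f : ℕ → A) (hfc : IsCentralSeq f) (hfpc : ∀ n, IsPosContraction (f n)) :
    ∃ ftil : ℕ → A, IsCentralSeq ftil ∧ (∀ n, IsPosContraction (ftil n)) ∧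
      Tendsto (fun n => ‖ftil n * f n - ftil n‖) atTop (𝓝 0) ∧
      ∃ c : ℝ,
        Tendsto (fun m : ℕ =>
          liminf (fun n => trInf fun τ : TState A => (τ.1 (selfPow (ftil n) m)).re) atTop)
          atTop (𝓝 c) ∧
        Tendsto (fun m : ℕ =>
          liminf (fun n => trInf fun τ : TState A => (τ.1 (selfPow (f n) m)).re) atTop)
          atTop (𝓝 c) := by
  let := CStarAlgebra.spectralOrder A
  have := CStarAlgebra.spectralOrderedRing A
  have hnonneg (n) : 0 ≤ f n := isPos_iff_nonneg.1 (hfpc n).1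
  have hnorm (k n) : ‖selfPow (f n) k‖ ≤ 1 := norm_selfPow_le_one (hfpc n).2 k
  let g (k n : ℕ) : ℝ := minTrace (selfPow (f n) k)
  have hg (n) : Antitone (g · n) :=
    minTrace_mono.comp_antitone (selfPow_antitone (hnonneg n) (hfpc n).2)
  have hg_le_one (k n) : |g k n| ≤ 1 := (abs_minTrace_le_norm _).trans (hnorm k n)
  obtain ⟨l, hl, hcentral, hlow⟩ := IsCentralSeq.exists_diagonal hfc.selfPow hnorm
    fun l => eventually_iInf_liminf_sub_lt (F := atTop) hg_le_one (l * l + l + l)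
      l.one_div_pos_of_nat
  have hinv := tendsto_one_div_add_atTop_nhds_zero_nat (𝕜 := ℝ).comp hl
  have hle := le_liminf_of_eventually_sub_lt (fun n => hg_le_one _ n) hinv hlow
  refine ⟨fun n => selfPow (f n) (l n), hcentral,
    fun n => ⟨isPos_iff_nonneg.2 (selfPow_nonneg (hnonneg n) _), hnorm _ n⟩,
    squeeze_zero (fun _ => norm_nonneg _)
      (fun n => norm_selfPow_mul_self_sub_le (hnonneg n) (hfpc n).2 (l n)) hinv,
    ⨅ k, liminf (g k) atTop, tendsto_const_nhds.congr fun m => ?_,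
    tendsto_liminf_of_antitone hg hg_le_one⟩
  simp only [selfPow_selfPow]
  exact (liminf_diagonal_eq_iInf hg hg_le_one (tendsto_atTop_mono (fun n => by lia) hl)
    ((hl.eventually_ge_atTop m).mono fun n hmn => by gcongr) hle).symm
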